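/- arXiv:math/0201321 — 2 statements merged into one kernel-verified Lean document; each statement's English description precedes it below -/
import Mathlib

section
/- Let K be a field of characteristic different from 5 containing a primitive 5th root of unity ζ, and let λ ∈ K with λ ≠ 0 and (λ² + λ − 1)(λ⁴ − 3λ³ + 4λ² − 2λ + 1)(λ⁴ + 2λ³ + 4λ² + 3λ + 1) ≠ 0. Set α = λ¹⁰ − 14λ⁵ − 1, β = −5λ²(1 + 2λ⁵), γ = 5λ³(λ⁵ − 2), and define the linear forms H_S(x) = α·x₀ + β·(ζ⁴x₁ + ζx₄) + γ·(ζ³x₂ + ζ²x₃) and H_T(x) = α·x₄ + β·(x₀ + x₃) + γ·(x₁ + x₂). Then any nonzero x ∈ K⁵ satisfying q_i(x) = 0 for all i ∈ Z/5Z and H_S(x) = 0 is a scalar multiple of (0, λζ, −ζ², ζ³, −λζ⁴), and any nonzero x ∈ K⁵ satisfying q_i(x) = 0 for all i and H_T(x) = 0 is a scalar multiple of (λ, −1, 1, −λ, 0). (I.e., H_S and H_T are the hypertangent hyperplanes at the 5-torsion points S and T.) -/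
/-!
Multiplication by `D₅` and cyclic shifts preserve the five quadrics, so both claims reduce to the
statement at the origin `O = (0 : λ : -1 : 1 : -λ)`, with hyperplane
`α x₀ + β (x₁ + x₄) + γ (x₂ + x₃) = 0`; this is `hyperosculating_origin`.

Write `L = λ⁵` and `Δ = L² + 11 L - 1`, which is the product assumed nonzero. The coordinates
`x₀, s₁ = x₁ + x₄, s₂ = x₂ + x₃` are even under the involution `[-1] : xᵢ ↦ x₋ᵢ`, and their span
corresponds to that of the sections `1, X, X²` of `𝒪(5·O)`. Hence they satisfy one conic relation,
and the hyperplane is the tangent line to this conic at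
`P = (5λ³ : -λ(L + 3) : 1 - 3L)`, the image of `O`.
Intersecting the conic with its tangent gives `Δ` times the square of a linear form, so
`(x₀, s₁, s₂) = t P` (`conic_tangent`).

With `e = x₁ + λ x₂ + λ (1 + 2L) t`, which plays the role of the section `Y`, the quadrics become
* `q₀ = e² + λ(1 - 3L) e t - 2λ e x₂ + 2λ²Δ t²`,
* `q₂ = e x₂ - (1 + 2L) e t - λΔ t²`,
* `q₂ - q₃ = -(1 + 7L) e t`.

Thus `e² = q₀ + 2λ q₂ - λ (q₂ - q₃) = 0`, and `q₂ = 0` then forces `t = 0`. The vanishing of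
`t` and `e` says that the point is `O`. No division by `2` occurs, so the argument is uniform in
the characteristic.
-/

/-- The line `H` is tangent to the conic in the even coordinates `x₀, s₁, s₂`, so a common
point `(a, s, r)` is, once `5λ` is inverted, a multiple of `(5λ³, -λ(λ⁵ + 3), 1 - 3λ⁵)`. -/
lemma conic_tangent {K : Type*} [Field K] {l a s r : K}
    (hD : l ^ 10 + 11 * l ^ 5 - 1 ≠ 0)
    (hC : l * s ^ 2 - 2 * l ^ 2 * a ^ 2 - a * r - l ^ 3 * r ^ 2 - l ^ 4 * a * s
      + l ^ 2 * s * r = 0)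
    (hH : (l ^ 10 - 14 * l ^ 5 - 1) * a + (-5 * l ^ 2 * (1 + 2 * l ^ 5)) * s
      + 5 * l ^ 3 * (l ^ 5 - 2) * r = 0) :
    5 * l ^ 2 * s = -(l ^ 5 + 3) * a ∧ 5 * l ^ 3 * r = (1 - 3 * l ^ 5) * a := by
  -- `u` and `w` vanish at the point of tangency.
  obtain ⟨u, hu⟩ : ∃ u, u = 5 * l ^ 2 * s + (l ^ 5 + 3) * a := ⟨_, rfl⟩
  obtain ⟨w, hw⟩ : ∃ w, w = 5 * l ^ 3 * r - (1 - 3 * l ^ 5) * a := ⟨_, rfl⟩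
  have hlin : (1 + 2 * l ^ 5) * u = (l ^ 5 - 2) * w := by
    rw [hu, hw]; linear_combination -hH
  have hQ : u ^ 2 + u * w - w ^ 2 = 0 := by
    have h : u ^ 2 + u * w - w ^ 2 - 5 * a * ((1 + 2 * l ^ 5) * u - (l ^ 5 - 2) * w) = 0 := by
      rw [hu, hw]; linear_combination 25 * l ^ 3 * hC
    linear_combination h + 5 * a * hlin
  -- Eliminating `u` between `hlin` and `hQ` leaves the resultant `-Δ`.
  have hw0 : w = 0 := by
    have h : (l ^ 10 + 11 * l ^ 5 - 1) * w ^ 2 = 0 := by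
      linear_combination -(1 + 2 * l ^ 5) ^ 2 * hQ
        + ((1 + 2 * l ^ 5) * u + (l ^ 5 - 2) * w + (1 + 2 * l ^ 5) * w) * hlin
    simpa [hD] using h
  have hu0 : u = 0 := by
    have h : u ^ 2 = 0 := by linear_combination hQ + (w - u) * hw0
    simpa using h
  constructor
  · linear_combination hu0 - hu
  · linear_combination hw0 - hw

/-- The hyperplane `α x₀ + β (x₁ + x₄) + γ (x₂ + x₃) = 0` meets the curve only at the origin
`(0 : λ : -1 : 1 : -λ)`. -/
lemma hyperosculating_origin {K : Type*} [Field K] (h5 : (5 : K) ≠ 0) {l : K} (hl : l ≠ 0)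
    (hD : l ^ 10 + 11 * l ^ 5 - 1 ≠ 0) {x0 x1 x2 x3 x4 : K}
    (q0 : l * x0 ^ 2 + l ^ 2 * x3 * x2 - x4 * x1 = 0)
    (q1 : l * x1 ^ 2 + l ^ 2 * x4 * x3 - x0 * x2 = 0)
    (q2 : l * x2 ^ 2 + l ^ 2 * x0 * x4 - x1 * x3 = 0)
    (q3 : l * x3 ^ 2 + l ^ 2 * x1 * x0 - x2 * x4 = 0)
    (q4 : l * x4 ^ 2 + l ^ 2 * x2 * x1 - x3 * x0 = 0)
    (hH : (l ^ 10 - 14 * l ^ 5 - 1) * x0 + (-5 * l ^ 2 * (1 + 2 * l ^ 5)) * (x1 + x4)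
      + 5 * l ^ 3 * (l ^ 5 - 2) * (x2 + x3) = 0) :
    x0 = 0 ∧ x1 = -x2 * l ∧ x3 = -x2 ∧ x4 = x2 * l := by
  obtain ⟨hs, hr⟩ := conic_tangent (a := x0) (s := x1 + x4) (r := x2 + x3) hD
    (by linear_combination q1 + q4 - l ^ 2 * (q2 + q3) - 2 * l * q0) hH
  obtain ⟨t, ht⟩ : ∃ t, x0 = 5 * l ^ 3 * t := ⟨x0 / (5 * l ^ 3), by field_simp⟩
  have h4 : x4 = -l * (l ^ 5 + 3) * t - x1 := by
    apply mul_left_cancel₀ (mul_ne_zero h5 (pow_ne_zero 2 hl))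
    linear_combination hs - (l ^ 5 + 3) * ht
  have h3 : x3 = (1 - 3 * l ^ 5) * t - x2 := by
    apply mul_left_cancel₀ (mul_ne_zero h5 (pow_ne_zero 3 hl))
    linear_combination hr + (1 - 3 * l ^ 5) * ht
  obtain ⟨e, he⟩ : ∃ e, x1 = e - l * x2 - l * (1 + 2 * l ^ 5) * t :=
    ⟨x1 + l * x2 + l * (1 + 2 * l ^ 5) * t, by ring⟩
  subst ht h4 h3 he
  have he0 : e = 0 := by
    have h : e ^ 2 = 0 := by linear_combination q0 + 2 * l * q2 - l * (q2 - q3)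
    simpa using h
  subst he0
  have ht0 : t = 0 := by
    have h : l * (l ^ 10 + 11 * l ^ 5 - 1) * t ^ 2 = 0 := by linear_combination -q2
    simpa [hl, hD] using h
  subst ht0
  refine ⟨?_, ?_, ?_, ?_⟩ <;> ring

/-- the hypertangent hyperplanes `H_S` and `H_T` at the 5-torsion points
`S = D₅·O_E` and `T = M_{1,5}·O_E` of the elliptic normal quintic `E_λ` meet the curve
only at `S` and `T` respectively. -/
theorem stmt6 (K : Type*) [Field K] (hchar : (5 : K) ≠ 0)
    (ζ : K) (hζ : IsPrimitiveRoot ζ 5)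
    (lam : K) (hlam : lam ≠ 0)
    (hsm : (lam ^ 2 + lam - 1) * (lam ^ 4 - 3 * lam ^ 3 + 4 * lam ^ 2 - 2 * lam + 1)
      * (lam ^ 4 + 2 * lam ^ 3 + 4 * lam ^ 2 + 3 * lam + 1) ≠ 0)
    (x : ZMod 5 → K) (hx : x ≠ 0)
    (hq : ∀ i : ZMod 5,
      lam * x i ^ 2 + lam ^ 2 * x (i - 2) * x (i + 2) - x (i - 1) * x (i + 1) = 0) :
    let α : K := lam ^ 10 - 14 * lam ^ 5 - 1
    let β : K := -5 * lam ^ 2 * (1 + 2 * lam ^ 5)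
    let γ : K := 5 * lam ^ 3 * (lam ^ 5 - 2)
    (α * x 0 + β * (ζ ^ 4 * x 1 + ζ * x 4) + γ * (ζ ^ 3 * x 2 + ζ ^ 2 * x 3) = 0 →
      ∃ c : K, x 0 = 0 ∧ x 1 = c * (lam * ζ) ∧ x 2 = -(c * ζ ^ 2) ∧ x 3 = c * ζ ^ 3 ∧
        x 4 = -(c * (lam * ζ ^ 4))) ∧
    (α * x 4 + β * (x 0 + x 3) + γ * (x 1 + x 2) = 0 →
      ∃ c : K, x 0 = c * lam ∧ x 1 = -c ∧ x 2 = c ∧ x 3 = -(c * lam) ∧ x 4 = 0) := by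
  intro α β γ
  have hD : lam ^ 10 + 11 * lam ^ 5 - 1 ≠ 0 := by
    intro h
    apply hsm
    linear_combination h
  have q0 : lam * x 0 ^ 2 + lam ^ 2 * x 3 * x 2 - x 4 * x 1 = 0 := hq 0
  have q1 : lam * x 1 ^ 2 + lam ^ 2 * x 4 * x 3 - x 0 * x 2 = 0 := hq 1
  have q2 : lam * x 2 ^ 2 + lam ^ 2 * x 0 * x 4 - x 1 * x 3 = 0 := hq 2
  have q3 : lam * x 3 ^ 2 + lam ^ 2 * x 1 * x 0 - x 2 * x 4 = 0 := hq 3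
  have q4 : lam * x 4 ^ 2 + lam ^ 2 * x 2 * x 1 - x 3 * x 0 = 0 := hq 4
  constructor
  · intro hH
    have hz : ζ ^ 5 = 1 := hζ.pow_eq_one
    -- Undo the action of `D₅`: in `yᵢ = ζ⁻ⁱ xᵢ` the hyperplane `H_S` is the one at the origin.
    obtain ⟨y1, h1⟩ : ∃ y, y = ζ ^ 4 * x 1 := ⟨_, rfl⟩
    obtain ⟨y2, h2⟩ : ∃ y, y = ζ ^ 3 * x 2 := ⟨_, rfl⟩
    obtain ⟨y3, h3⟩ : ∃ y, y = ζ ^ 2 * x 3 := ⟨_, rfl⟩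
    obtain ⟨y4, h4⟩ : ∃ y, y = ζ * x 4 := ⟨_, rfl⟩
    have e1 : x 1 = ζ * y1 := by rw [h1]; linear_combination -x 1 * hz
    have e2 : x 2 = ζ ^ 2 * y2 := by rw [h2]; linear_combination -x 2 * hz
    have e3 : x 3 = ζ ^ 3 * y3 := by rw [h3]; linear_combination -x 3 * hz
    have e4 : x 4 = ζ ^ 4 * y4 := by rw [h4]; linear_combination -x 4 * hz
    rw [← h1, ← h2, ← h3, ← h4] at hH
    rw [e1, e2, e3, e4] at q0
    rw [e1, e2, e3, e4] at q1
    rw [e1, e2, e3, e4] at q2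
    rw [e1, e2, e3, e4] at q3
    rw [e1, e2, e3, e4] at q4
    obtain ⟨g0, g1, g3, g4⟩ := hyperosculating_origin (x0 := x 0) (x1 := y1) (x2 := y2)
      (x3 := y3) (x4 := y4) hchar hlam hD
      (by linear_combination q0 - (lam ^ 2 * y3 * y2 - y4 * y1) * hz)
      (by linear_combination ζ ^ 3 * q1 - (lam * y1 ^ 2 - x 0 * y2
            + lam ^ 2 * y4 * y3 * (ζ ^ 5 + 1)) * hz)
      (by linear_combination ζ * q2 - (lam * y2 ^ 2 + lam ^ 2 * x 0 * y4 - y1 * y3) * hz)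
      (by linear_combination ζ ^ 4 * q3 - (lam * y3 ^ 2 * (ζ ^ 5 + 1) + lam ^ 2 * y1 * x 0
            - y2 * y4 * (ζ ^ 5 + 1)) * hz)
      (by linear_combination ζ ^ 2 * q4 - (lam * y4 ^ 2 * (ζ ^ 5 + 1) + lam ^ 2 * y2 * y1
            - y3 * x 0) * hz)
      hH
    refine ⟨-y2, g0, ?_, ?_, ?_, ?_⟩
    · rw [e1, g1]; ring
    · rw [e2]; ring
    · rw [e3, g3]; ring
    · rw [e4, g4]; ring
  · intro hH
    -- Undo the cyclic shift: `yᵢ = xᵢ₋₁`.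
    obtain ⟨g0, g1, g3, g4⟩ := hyperosculating_origin (x0 := x 4) (x1 := x 0) (x2 := x 1)
      (x3 := x 2) (x4 := x 3) hchar hlam hD
      (by linear_combination q4) (by linear_combination q0) (by linear_combination q1)
      (by linear_combination q2) (by linear_combination q3) hH
    exact ⟨-x 1, g1, (neg_neg _).symm, g3, by rw [g4]; ring, g0⟩
end

section
/- Let K be a field of characteristic different from 5 containing a primitive 5th root of unity ζ, let a ∈ K be nonzero and not a fifth power, let L = K(α) with α⁵ = a, let σ be the generator of Gal(L/K) with σ(α) = ζα, and let Tr = Tr_{L/K}. Let β ∈ L be nonzero, set u₁ = σ⁴(β)/β and u₂ = σ³(β)σ⁴(β)/(β·σ(β)), let λ ∈ K be nonzero, and let Q' be the quadratic form Q'(x) = Σ_{i∈Z/5Z} x_i² + λ·Σ_{i∈Z/5Z} σ^{i+1}(u₁)·x_i x_{i+2} − λ⁻¹·Σ_{i∈Z/5Z} σ^{i+3}(u₂)·x_i x_{i+1}. For 0 ≤ i ≤ 4 define a_{ii} = Tr(α^{−2i}) + λ·Tr(u₁·α^{−2i}) − λ⁻¹·Tr(u₂·α^{−2i}), and for 0 ≤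 i < j ≤ 4 define a_{ij} = Tr(2·α^{−(i+j)}) + λ·Tr((ζ^{i−j} + ζ^{j−i})·u₁·α^{−(i+j)}) − λ⁻¹·Tr((ζ^{2i−2j} + ζ^{2j−2i})·u₂·α^{−(i+j)}). Let Q = Σ_{0≤i≤j≤4} a_{ij} x_i x_j, and let M = [v₀ | v₁ | v₂ | v₃ | v₄] where v_j = (1, αζʲ, (αζʲ)², (αζʲ)³, (αζʲ)⁴)ᵀ. Then every a_{ij} lies in K, and there exists a nonzero constant c ∈ L such that Q(M·x) = c·Q'(x) as polynomials in x₀, ..., x₄. -/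
/-!
Let `ψ(n) = ζ⁻ⁿ`, an additive character of `ZMod 5`, and consider the five linear forms
`ℓ_k(y) = ∑ᵢ σᵏ(α)⁻ⁱ yᵢ = ∑ᵢ α⁻ⁱ ψ(ki) yᵢ`. Orthogonality of characters gives `ℓ_k(Mx) = 5 x_k`.
Expanding the traces, and splitting each off-diagonal coefficient `a_{ij}` into an `(i,j)` and a
`(j,i)` contribution, yields
`Q = ∑ₖ (ℓ_k² + λ σᵏ(u₁) ℓ_{k-1} ℓ_{k+1} - λ⁻¹ σᵏ(u₂) ℓ_{k-2} ℓ_{k+2})`,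
so `Q(Mx) = 25 Q'(x)` after reindexing the sums over `k`, which uses `σ⁵ = 1`.

The coefficients lie in `K` because `∑ₖ σᵏ` is `K`-linear, the powers `αⁿ` span `L`, and
`∑ₖ σᵏ(αⁿ)` is `5 a^{n/5}` if `5 ∣ n` and `0` otherwise.
-/

section Aux

variable {K L : Type*} [Field K] [Field L] [Algebra K L]

lemma sigma_pow_alpha {ζ : K} {α : L} {σ : L ≃ₐ[K] L} (hσ : σ α = algebraMap K L ζ * α) (k : ℕ) :
    (σ ^ k) α = algebraMap K L ζ ^ k * α := by
  induction k with
  | zero => simp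
  | succ k ih => rw [pow_succ', AlgEquiv.mul_apply, ih]; simp [hσ]; ring

lemma sigma_pow_five {ζ : K} (hζ : IsPrimitiveRoot ζ 5) {α : L}
    (hgen : Algebra.adjoin K {α} = ⊤) {σ : L ≃ₐ[K] L} (hσ : σ α = algebraMap K L ζ * α) :
    σ ^ 5 = 1 := by
  have h : ((σ ^ 5 : L ≃ₐ[K] L) : L →ₐ[K] L) = ((1 : L ≃ₐ[K] L) : L →ₐ[K] L) := by
    refine AlgHom.ext_of_adjoin_eq_top hgen ?_
    rintro x rfl
    simp only [AlgEquiv.coe_toAlgHom, AlgEquiv.one_apply]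
    rw [sigma_pow_alpha hσ, ← map_pow, hζ.pow_eq_one, map_one, one_mul]
  ext x
  exact DFunLike.congr_fun h x

/-- The trace `∑ₖ σᵏ` takes values in `K`: by linearity it suffices to check this on the powers
of `α`, where the sum is a geometric sum of fifth roots of unity. -/
lemma trace_mem {ζ : K} (hζ : IsPrimitiveRoot ζ 5) {a : K} {α : L}
    (hα : α ^ 5 = algebraMap K L a)
    (hgen : Algebra.adjoin K {α} = ⊤) {σ : L ≃ₐ[K] L} (hσ : σ α = algebraMap K L ζ * α) (s : L) :
    ∑ k ∈ Finset.range 5, (σ ^ k) s ∈ (algebraMap K L).range := by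
  have hs : s ∈ Algebra.adjoin K {α} := hgen ▸ Algebra.mem_top
  rw [Algebra.adjoin_singleton_eq_range_aeval] at hs
  obtain ⟨p, rfl⟩ := hs
  induction p using Polynomial.induction_on' with
  | add p q hp hq =>
    simp only [map_add, Finset.sum_add_distrib]
    exact add_mem hp hq
  | monomial n c =>
    have h : ∑ k ∈ Finset.range 5, (σ ^ k) (Polynomial.aeval α (Polynomial.monomial n c))
        = algebraMap K L (c * ∑ k ∈ Finset.range 5, (ζ ^ n) ^ k) * α ^ n := by
      simp only [Polynomial.aeval_monomial, map_mul, map_sum, map_pow, AlgEquiv.commutes,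
        sigma_pow_alpha hσ, Finset.mul_sum, Finset.sum_mul]
      refine Finset.sum_congr rfl fun k _ => ?_
      ring
    change ∑ k ∈ Finset.range 5, (σ ^ k) (Polynomial.aeval α (Polynomial.monomial n c)) ∈ _
    rw [h]
    by_cases hn : 5 ∣ n
    · obtain ⟨m, rfl⟩ := hn
      rw [pow_mul α, hα, ← map_pow, ← map_mul]
      exact ⟨_, rfl⟩
    · have h1 : ζ ^ n ≠ 1 := fun h => hn ((hζ.pow_eq_one_iff_dvd n).1 h)
      have h2 : ∑ k ∈ Finset.range 5, (ζ ^ n) ^ k = 0 := by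
        rw [geom_sum_eq h1, ← pow_mul, mul_comm, pow_mul, hζ.pow_eq_one]
        simp
      rw [h2]
      simp

lemma sum_upper {R : Type*} [CommRing R] (A B : ZMod 5 → ZMod 5 → R) (y : ZMod 5 → R)
    (hd : ∀ i, A i i = B i i) (ho : ∀ i j : ZMod 5, i.val < j.val → A i j = B i j + B j i) :
    (∑ i, ∑ j, if i.val ≤ j.val then A i j * (y i * y j) else 0)
      = ∑ i, ∑ j, B i j * (y i * y j) := by
  have key : ∀ i j : ZMod 5, (if i.val ≤ j.val then A i j * (y i * y j) else 0)
      = (if i.val ≤ j.val then B i j * (y i * y j) else 0)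
        + (if i.val < j.val then B j i * (y j * y i) else 0) := by
    intro i j
    rcases lt_trichotomy i.val j.val with h | h | h
    · simp only [h.le, h, if_true, ho i j h]; ring
    · obtain rfl := ZMod.val_injective 5 h
      simp [hd]
    · simp [h.not_ge, h.le]
  simp only [key, Finset.sum_add_distrib]
  rw [Finset.sum_comm (f := fun i j : ZMod 5 => if i.val < j.val then B j i * (y j * y i) else 0),
    ← Finset.sum_add_distrib]
  refine Finset.sum_congr rfl fun i _ => ?_
  rw [← Finset.sum_add_distrib]
  refine Finset.sum_congr rfl fun j _ => ?_
  rcases lt_or_ge j.val i.val with h | h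
  · simp [h, h.not_ge]
  · simp [h, h.not_gt]

/-- Evaluation of a quadratic form whose Gram matrix is a sum of products of linear forms. -/
lemma sum_rank_one {R : Type*} [CommRing R] (p q : ZMod 5 → ZMod 5 → R) (S : ZMod 5 → R)
    (y : ZMod 5 → R) :
    ∑ i, ∑ j, (∑ k, S k * (p k i * q k j)) * (y i * y j)
      = ∑ k, S k * ((∑ i, p k i * y i) * (∑ j, q k j * y j)) := by
  simp only [Finset.sum_mul_sum]
  simp only [Finset.mul_sum, Finset.sum_mul]
  rw [Finset.sum_congr rfl fun i _ => Finset.sum_comm, Finset.sum_comm]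
  refine Finset.sum_congr rfl fun k _ => Finset.sum_congr rfl fun i _ =>
    Finset.sum_congr rfl fun j _ => ?_
  ring

end Aux


open MvPolynomial in
/-- the quadratic form `Q = Σ_{i≤j} a_{ij} xᵢxⱼ` built from traces has all
coefficients in `K`, and substituting the eigenvector matrix `M` into `Q` recovers the
eigencoordinate quadric `Q'` up to a nonzero constant. -/
theorem stmt14 (K : Type*) [Field K] (hchar : (5 : K) ≠ 0)
    (ζ : K) (hζ : IsPrimitiveRoot ζ 5)
    (a : K) (ha : a ≠ 0) (hnp : ¬∃ c : K, c ^ 5 = a)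
    (L : Type*) [Field L] [Algebra K L] (α : L) (hα : α ^ 5 = algebraMap K L a)
    (hgen : Algebra.adjoin K {α} = ⊤)
    (σ : L ≃ₐ[K] L) (hσ : σ α = algebraMap K L ζ * α)
    (β : L) (hβ : β ≠ 0) (lam : K) (hlam : lam ≠ 0) :
    let ζ' : L := algebraMap K L ζ
    let lam' : L := algebraMap K L lam
    let Tr : L → L := fun s => ∑ k ∈ Finset.range 5, (σ ^ k) s
    let u₁ : L := (σ ^ 4 : L ≃ₐ[K] L) β / β
    let u₂ : L := (σ ^ 3 : L ≃ₐ[K] L) β * (σ ^ 4 : L ≃ₐ[K] L) β / (β * σ β)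
    let Q' : MvPolynomial (ZMod 5) L :=
      (∑ i : ZMod 5, X i ^ 2)
        + C lam' * ∑ i : ZMod 5, C ((σ ^ (i.val + 1)) u₁) * (X i * X (i + 2))
        - C lam'⁻¹ * ∑ i : ZMod 5, C ((σ ^ (i.val + 3)) u₂) * (X i * X (i + 1))
    let aa : ZMod 5 → ZMod 5 → L := fun i j =>
      if i = j then
        Tr (α⁻¹ ^ (2 * i.val)) + lam' * Tr (u₁ * α⁻¹ ^ (2 * i.val))
          - lam'⁻¹ * Tr (u₂ * α⁻¹ ^ (2 * i.val))
      else
        Tr (2 * α⁻¹ ^ (i.val + j.val))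
          + lam' * Tr ((ζ' ^ (j.val - i.val) + ζ'⁻¹ ^ (j.val - i.val))
              * u₁ * α⁻¹ ^ (i.val + j.val))
          - lam'⁻¹ * Tr ((ζ' ^ (2 * (j.val - i.val)) + ζ'⁻¹ ^ (2 * (j.val - i.val)))
              * u₂ * α⁻¹ ^ (i.val + j.val))
    let Q : MvPolynomial (ZMod 5) L :=
      ∑ i : ZMod 5, ∑ j : ZMod 5,
        if i.val ≤ j.val then C (aa i j) * (X i * X j) else 0
    let v : ZMod 5 → ZMod 5 → L := fun j i => (α * ζ' ^ j.val) ^ i.val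
    let M : Matrix (ZMod 5) (ZMod 5) L := Matrix.of fun i j => v j i
    let act : Matrix (ZMod 5) (ZMod 5) L → MvPolynomial (ZMod 5) L →
        MvPolynomial (ZMod 5) L := fun N p =>
      aeval (fun i : ZMod 5 => ∑ j : ZMod 5, C (N i j) * X j) p
    (∀ i j : ZMod 5, i.val ≤ j.val → aa i j ∈ Set.range (algebraMap K L)) ∧
    ∃ c : L, c ≠ 0 ∧ act M Q = C c * Q' := by
  intro ζ' lam' Tr u₁ u₂ Q' aa Q v M act
  have hTr : ∀ s, Tr s ∈ (algebraMap K L).range := trace_mem hζ hα hgen hσ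
  have hlm : lam' ∈ (algebraMap K L).range := ⟨lam, rfl⟩
  have hlm' : lam'⁻¹ ∈ (algebraMap K L).range := ⟨lam⁻¹, map_inv₀ _ _⟩
  refine ⟨fun i j _ => ?_, 25, ?_, ?_⟩
  · change aa i j ∈ (algebraMap K L).range
    simp only [aa]
    split_ifs <;>
      exact sub_mem (add_mem (hTr _) (mul_mem hlm (hTr _))) (mul_mem hlm' (hTr _))
  · have h5 : (algebraMap K L) (5 * 5) ≠ 0 :=
      (map_ne_zero _).2 (mul_ne_zero hchar hchar)
    intro h
    apply h5
    rw [← h]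
    simp only [map_mul, map_ofNat]
    norm_num
  have hα0 : α ≠ 0 := by
    rintro rfl
    exact (map_ne_zero (algebraMap K L)).2 ha (by rw [← hα]; simp)
  have hζ' : IsPrimitiveRoot ζ' 5 := hζ.map_of_injective (algebraMap K L).injective
  have hz : IsPrimitiveRoot ζ'⁻¹ 5 := hζ'.inv
  have hσ5 : σ ^ 5 = 1 := sigma_pow_five hζ hgen hσ
  let ψ : AddChar (ZMod 5) L := AddChar.zmodChar 5 hz.pow_eq_one
  have hψn : ∀ n : ℕ, ψ (n : ZMod 5) = ζ'⁻¹ ^ n := fun n => AddChar.zmodChar_apply' _ n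
  have hψn' : ∀ n : ℕ, ψ (-(n : ZMod 5)) = ζ' ^ n := fun n => by
    rw [AddChar.map_neg_eq_inv, hψn, inv_pow, inv_inv]
  have hprim : ψ.IsPrimitive := AddChar.zmodChar_primitive_of_primitive_root 5 hz
  let p : ZMod 5 → ZMod 5 → L := fun k i => α⁻¹ ^ i.val * ψ (k * i)
  let y : ZMod 5 → MvPolynomial (ZMod 5) L := fun i => ∑ j, C (M i j) * X j
  -- the linear form `ℓ_k` applied to `Mx` is `5 x_k`
  have hl : ∀ k, ∑ i, C (p k i) * y i = 5 * X k := by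
    intro k
    simp only [y, Finset.mul_sum]
    rw [Finset.sum_comm]
    have h : ∀ j, ∑ i, C (p k i) * (C (M i j) * X j)
        = (if k = j then 5 * X k else 0 : MvPolynomial (ZMod 5) L) := by
      intro j
      have h1 : ∀ i, p k i * M i j = ψ (i * (k - j)) := by
        intro i
        have h2 : ζ' ^ (j.val * i.val) = ψ (-(j * i)) := by
          rw [← hψn']; simp
        simp only [p, M, v, Matrix.of_apply]
        rw [mul_pow, ← pow_mul, h2, mul_mul_mul_comm, ← mul_pow, inv_mul_cancel₀ hα0, one_pow,
          one_mul, ← AddChar.map_add_eq_mul]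
        congr 1; ring
      simp only [← mul_assoc, ← C_mul, h1]
      rw [← Finset.sum_mul, ← map_sum, AddChar.sum_mulShift _ hprim]
      by_cases hkj : k = j
      · subst hkj
        simp only [sub_self, if_true, ZMod.card]
        congr 1
      · simp [hkj, sub_eq_zero]
    rw [Finset.sum_congr rfl fun j _ => h j]
    simp
  have hTrZ : ∀ s, Tr s = ∑ k : ZMod 5, (σ ^ k.val) s := fun s =>
    Finset.sum_range (fun k => (σ ^ k) s)
  have hσα : ∀ (k : ZMod 5) (i j : ZMod 5),
      (σ ^ k.val) (α⁻¹ ^ (i.val + j.val)) = α⁻¹ ^ (i.val + j.val) * ψ (k * (i + j)) := by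
    intro k i j
    have h : ψ (k * (i + j)) = (ζ'⁻¹ ^ k.val) ^ (i.val + j.val) := by
      rw [← pow_mul, ← hψn]; simp
    rw [h, map_pow, map_inv₀, sigma_pow_alpha hσ, ← mul_pow, mul_inv, inv_pow, mul_comm]
  -- the trace as a bilinear coefficient, twisted by `ψ (d * (j - i))`
  have hB : ∀ (d : ZMod 5) (u : L) (i j : ZMod 5) (z : K),
      algebraMap K L z = ψ (d * (j - i)) →
      Tr (algebraMap K L z * u * α⁻¹ ^ (i.val + j.val))
        = ∑ k : ZMod 5, (σ ^ k.val) u * (p (k - d) i * p (k + d) j) := by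
    intro d u i j z hzz
    rw [hTrZ]
    refine Finset.sum_congr rfl fun k _ => ?_
    rw [map_mul, map_mul, AlgEquiv.commutes, hσα, hzz]
    simp only [p]
    have h : ψ ((k - d) * i) * ψ ((k + d) * j) = ψ (k * (i + j)) * ψ (d * (j - i)) := by
      rw [← AddChar.map_add_eq_mul, ← AddChar.map_add_eq_mul]; congr 1; ring
    linear_combination (-(σ ^ k.val) u * α⁻¹ ^ (i.val + j.val)) * h
  let B : ZMod 5 → L → ZMod 5 → ZMod 5 → L := fun d u i j =>
    ∑ k : ZMod 5, (σ ^ k.val) u * (p (k - d) i * p (k + d) j)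
  have hdiag : ∀ (d : ZMod 5) (u : L) (i : ZMod 5), Tr (u * α⁻¹ ^ (2 * i.val)) = B d u i i := by
    intro d u i
    have := hB d u i i 1 (by simp)
    rwa [map_one, one_mul, ← two_mul] at this
  have hTradd : ∀ s t, Tr (s + t) = Tr s + Tr t := fun s t => by
    simp only [Tr, map_add, Finset.sum_add_distrib]
  have hoff : ∀ (d : ℕ) (u : L) (i j : ZMod 5), i.val < j.val →
      Tr ((ζ' ^ (d * (j.val - i.val)) + ζ'⁻¹ ^ (d * (j.val - i.val))) * u * α⁻¹ ^ (i.val + j.val))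
        = B d u i j + B d u j i := by
    intro d u i j hij
    have hcast : ((d * (j.val - i.val) : ℕ) : ZMod 5) = d * (j - i) := by
      rw [Nat.cast_mul, Nat.cast_sub hij.le]; simp
    have h1 := hB d u i j (ζ⁻¹ ^ (d * (j.val - i.val))) (by
      rw [← hcast, hψn, map_pow, map_inv₀])
    have h2 := hB d u j i (ζ ^ (d * (j.val - i.val))) (by
      rw [← neg_sub, mul_neg, ← hcast, hψn', map_pow])
    rw [map_pow, map_inv₀] at h1
    rw [map_pow, add_comm j.val] at h2
    rw [add_mul, add_mul, hTradd, h1, h2, add_comm]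
  let BB : ZMod 5 → ZMod 5 → L := fun i j => B 0 1 i j + lam' * B 1 u₁ i j - lam'⁻¹ * B 2 u₂ i j
  have haad : ∀ i, aa i i = BB i i := by
    intro i
    have h0 := hdiag 0 1 i
    rw [one_mul] at h0
    simp only [aa, BB, if_true]
    rw [h0, hdiag 1 u₁, hdiag 2 u₂]
  have haao : ∀ i j : ZMod 5, i.val < j.val → aa i j = BB i j + BB j i := by
    intro i j hij
    have hne : i ≠ j := by rintro rfl; exact lt_irrefl _ hij
    have h0 := hoff 0 1 i j hij
    have h1 := hoff 1 u₁ i j hij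
    have h2 := hoff 2 u₂ i j hij
    simp only [zero_mul, pow_zero, one_mul, mul_one, one_add_one_eq_two, Nat.cast_zero,
      Nat.cast_one, Nat.cast_ofNat] at h0 h1 h2
    simp only [aa, BB, if_neg hne]
    rw [h0, h1, h2]
    ring
  have hact : act M Q = ∑ i, ∑ j, if i.val ≤ j.val then C (aa i j) * (y i * y j) else 0 := by
    simp only [act, Q, map_sum]
    refine Finset.sum_congr rfl fun i _ => Finset.sum_congr rfl fun j _ => ?_
    split_ifs
    · simp only [map_mul, aeval_X, y]
      rw [← algebraMap_eq, AlgHom.commutes]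
    · simp
  rw [hact, sum_upper (fun i j => C (aa i j)) (fun i j => C (BB i j)) y
    (fun i => by rw [haad]) (fun i j h => by rw [haao i j h, C_add])]
  have hform : ∀ (d : ZMod 5) (u : L), ∑ i, ∑ j, C (B d u i j) * (y i * y j)
      = 25 * ∑ k : ZMod 5, C ((σ ^ k.val) u) * (X (k - d) * X (k + d)) := by
    intro d u
    have := sum_rank_one (fun k i => C (p (k - d) i)) (fun k i => C (p (k + d) i))
      (fun k : ZMod 5 => C ((σ ^ k.val) u)) y
    simp only [hl] at this
    simp only [B, map_sum, C_mul]
    rw [this, Finset.mul_sum]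
    refine Finset.sum_congr rfl fun k _ => ?_
    ring
  have hsplit : ∑ i, ∑ j, C (BB i j) * (y i * y j)
      = ∑ i, ∑ j, C (B 0 1 i j) * (y i * y j)
        + C lam' * ∑ i, ∑ j, C (B 1 u₁ i j) * (y i * y j)
        - C lam'⁻¹ * ∑ i, ∑ j, C (B 2 u₂ i j) * (y i * y j) := by
    simp only [Finset.mul_sum, ← Finset.sum_add_distrib, ← Finset.sum_sub_distrib]
    refine Finset.sum_congr rfl fun i _ => Finset.sum_congr rfl fun j _ => ?_
    simp only [BB, C_add, C_sub, C_mul]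
    ring
  have hσmod : ∀ (i : ZMod 5) (n : ℕ), σ ^ (i + n).val = σ ^ (i.val + n) := by
    intro i n
    have h : (i + n).val = (i.val + n) % 5 := by
      rw [← ZMod.val_natCast]; simp
    rw [h, ← pow_mod_orderOf σ ((i.val + n) % 5), ← pow_mod_orderOf σ (i.val + n),
      Nat.mod_mod_of_dvd _ (orderOf_dvd_of_pow_eq_one hσ5)]
  have e0 : ∑ k : ZMod 5, C ((σ ^ k.val) (1 : L)) * (X (k - 0) * X (k + 0))
      = ∑ i : ZMod 5, (X i ^ 2 : MvPolynomial (ZMod 5) L) := by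
    refine Finset.sum_congr rfl fun k _ => ?_
    simp [sq]
  have e1 : ∑ k : ZMod 5, C ((σ ^ k.val) u₁) * (X (k - 1) * X (k + 1))
      = ∑ i : ZMod 5, C ((σ ^ (i.val + 1)) u₁) * (X i * X (i + 2)) := by
    rw [← Equiv.sum_comp (Equiv.addRight (1 : ZMod 5))]
    refine Finset.sum_congr rfl fun k _ => ?_
    have h := hσmod k 1
    rw [Nat.cast_one] at h
    rw [Equiv.coe_addRight, h, add_sub_cancel_right, add_assoc, one_add_one_eq_two]
  have e2 : ∑ k : ZMod 5, C ((σ ^ k.val) u₂) * (X (k - 2) * X (k + 2))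
      = ∑ i : ZMod 5, C ((σ ^ (i.val + 3)) u₂) * (X i * X (i + 1)) := by
    rw [← Equiv.sum_comp (Equiv.addRight (3 : ZMod 5))]
    refine Finset.sum_congr rfl fun k _ => ?_
    have h := hσmod k 3
    rw [Nat.cast_ofNat] at h
    -- modulo 5: `3 - 2 = 1` and `3 + 2 = 0`
    have h3 : k + 3 + 2 = k := by rw [add_assoc]; exact add_zero k
    have h4 : k + 3 - 2 = k + 1 := by rw [add_sub_assoc]; rfl
    rw [Equiv.coe_addRight, h, h3, h4, mul_comm (X k)]
  rw [hsplit, hform, hform, hform, e0, e1, e2]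
  have h25 : (C (25 : L) : MvPolynomial (ZMod 5) L) = 25 := map_ofNat C 25
  rw [h25]
  simp only [Q']
  ring
end
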